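/- arXiv:2207.09552 — 3 statements merged into one kernel-verified Lean document; each statement's English description precedes it below -/
import Mathlib

section
/- Let K be a centrally symmetric convex body in ℝ² and suppose there exists a triangle T° with barycenter at the origin whose vertices lie on the boundary of the polar body K°, such that |K|·|T°| ≤ (3√3/4)π. Then d_{2,1}(K) ≤ √3·π/8. -/
open MeasureTheory Set Matrix Pointwise

noncomputable section

/-- The lattice `A · ℤⁿ` associated with an (invertible) matrix `A`. -/
def latticeOf {n : ℕ} (A : Matrix (Fin n) (Fin n) ℝ) : Set (Fin n → ℝ) :=
  Set.range fun m : Fin n → ℤ => A.mulVec fun i => (m i : ℝ)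

/-- `Λ + K` is non-separable: every affine hyperplane `{y | ⟨u,y⟩ = c}` (with `u ≠ 0`)
meets `x + K` for some `x ∈ Λ`. -/
def NonSeparable {n : ℕ} (Λ K : Set (Fin n → ℝ)) : Prop :=
  ∀ u : Fin n → ℝ, u ≠ 0 → ∀ c : ℝ, ∃ x ∈ Λ, ∃ y ∈ K, u ⬝ᵥ (x + y) = c

/-- `d_{n,n-1}(K)`: the smallest density `|K|/d(Λ)` of a non-separable
lattice of translates of `K`. -/
def dTrans {n : ℕ} (K : Set (Fin n → ℝ)) : ℝ :=
  sInf {d : ℝ | ∃ A : Matrix (Fin n) (Fin n) ℝ, A.det ≠ 0 ∧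
    NonSeparable (latticeOf A) K ∧ d = (volume K).toReal / |A.det|}

/-- The polar body `K° = {x | ∀ y ∈ K, ⟨y,x⟩ ≤ 1}`. -/
def polarBody {n : ℕ} (K : Set (Fin n → ℝ)) : Set (Fin n → ℝ) :=
  {x | ∀ y ∈ K, y ⬝ᵥ x ≤ 1}

/-!
Let `N` be the gauge of `K°`, that is, the support function of `K`. Along a direction `u`, a
symmetric `K` covers an interval of half-length `N u`, and a lattice `Λ` projects to a subgroup of
`ℝ`. A dense subgroup leaves no gap; a subgroup `g ℤ` means `u = g • w` with `w` in the dual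
lattice, and leaves no gap as soon as `|g| / 2 ≤ |g| * N w`. So any lattice `P ℤⁿ` with `N ≥ 1`
off the origin yields the non-separable lattice `2 P⁻ᵀ ℤⁿ` of density `|K| |det P| / 2ⁿ`.

If `p₁`, `p₂` and `p₁ + p₂ = -p₃` are unit vectors for `N`, the lattice they span is such a `P ℤ²`,
and the central triangle has area `3 / 2 * |det P|`, which gives `d_{2,1}(K) ≤ |K| |T°| / 6`.
-/

open Filter Topology

section HexagonalLattice

variable {E : Type*} [AddCommGroup E] [Module ℝ E] (N : Seminorm ℝ E) {p q : E}

theorem seminorm_zsmul (m : ℤ) (x : E) : N (m • x) = |(m : ℝ)| * N x := by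
  rw [← Int.cast_smul_eq_zsmul ℝ, map_smul_eq_mul, Real.norm_eq_abs]

theorem le_seminorm_zsmul_sub_zsmul (hpq : N p = N q) {a b : ℤ} (hab : |a| ≠ |b|) :
    N p ≤ N (a • p - b • q) := by
  have one_le_gap : (1 : ℝ) ≤ |(|(a : ℝ)| - |(b : ℝ)|)| := by
    exact_mod_cast Int.one_le_abs (sub_ne_zero.2 hab)
  calc
    N p ≤ |(|(a : ℝ)| - |(b : ℝ)|)| * N p := le_mul_of_one_le_left (apply_nonneg N p) one_le_gap
    _ = |N (a • p) - N (b • q)| := by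
      rw [seminorm_zsmul, seminorm_zsmul, ← hpq, ← sub_mul, abs_mul,
        abs_of_nonneg (apply_nonneg N p)]
    _ ≤ N (a • p - b • q) := abs_sub_map_le_sub N _ _

-- `|m|`, `|n|` and `|m - n|` cannot all agree, and `m • p + n • q` has coefficients of absolute
-- values `|m|`, `|n|` in terms of `p`, `q`, and `|m - n|`, `|n|` in terms of `p`, `p + q`.
theorem le_seminorm_zsmul_add_zsmul (hq : N p = N q) (hpq : N p = N (p + q)) {m n : ℤ}
    (hmn : ¬(m = 0 ∧ n = 0)) : N p ≤ N (m • p + n • q) := by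
  have abs_ne : |m| ≠ |-n| ∨ |m - n| ≠ |-n| := by
    simp only [abs_eq_max_neg]
    omega
  rcases abs_ne with h | h
  · convert le_seminorm_zsmul_sub_zsmul N hq h using 2
    module
  · convert le_seminorm_zsmul_sub_zsmul N hpq h using 2
    module

end HexagonalLattice

theorem le_seminorm_of_mem_latticeOf (N : Seminorm ℝ (Fin 2 → ℝ)) {p q w : Fin 2 → ℝ}
    (hq : N p = N q) (hpq : N p = N (p + q)) (hw : w ∈ latticeOf (Matrix.of ![p, q])ᵀ)
    (hw0 : w ≠ 0) : N p ≤ N w := by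
  obtain ⟨m, hm⟩ := hw
  obtain rfl : m 0 • p + m 1 • q = w := by
    ext i
    simp [← hm, mulVec_transpose, vecHead, vecTail]
  refine le_seminorm_zsmul_add_zsmul N hq hpq fun ⟨h0, h1⟩ => hw0 ?_
  rw [h0, h1, zero_smul, zero_smul, add_zero]

section PolarGauge

variable {n : ℕ} {K : Set (Fin n → ℝ)} {u : Fin n → ℝ}

theorem convex_polarBody (K : Set (Fin n → ℝ)) : Convex ℝ (polarBody K) := by
  intro v hv w hw a b ha hb hab y hy
  calc
    y ⬝ᵥ (a • v + b • w) = a * (y ⬝ᵥ v) + b * (y ⬝ᵥ w) := by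
      simp only [dotProduct_add, dotProduct_smul, smul_eq_mul]
    _ ≤ a * 1 + b * 1 := by gcongr <;> [exact hv y hy; exact hw y hy]
    _ = 1 := by rw [mul_one, mul_one, hab]

theorem balanced_polarBody (hsymm : ∀ y ∈ K, -y ∈ K) : Balanced ℝ (polarBody K) :=
  (balanced_iff_neg_mem (convex_polarBody K)).2 fun v hv y hy => by
    rw [dotProduct_neg, ← neg_dotProduct]
    exact hv (-y) (hsymm y hy)

theorem polarBody_mem_nhds_zero (hK : IsCompact K) : polarBody K ∈ 𝓝 0 :=
  hK.eventually_forall_of_forall_eventually fun y _ =>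
    (Continuous.tendsto' (by fun_prop) _ 0 (by simp)).eventually_le_const one_pos

theorem gauge_polarBody_le {r : ℝ} (hr : 0 ≤ r) (h : ∀ y ∈ K, u ⬝ᵥ y ≤ r) :
    gauge (polarBody K) u ≤ r := by
  refine le_of_forall_pos_le_add fun ε hε => gauge_le_of_mem (by positivity) ?_
  rw [mem_smul_set_iff_inv_smul_mem₀ (by positivity)]
  intro y hy
  rw [dotProduct_smul, smul_eq_mul, dotProduct_comm, inv_mul_le_one₀ (by positivity)]
  linarith [h y hy]

theorem dotProduct_le_gauge_polarBody (hK : IsCompact K) {y : Fin n → ℝ} (hy : y ∈ K) :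
    u ⬝ᵥ y ≤ gauge (polarBody K) u := by
  refine le_of_forall_gt_imp_ge_of_dense fun a ha => ?_
  obtain ⟨b, hb, hba, v, hv, rfl⟩ :=
    exists_lt_of_gauge_lt (absorbent_nhds_zero (polarBody_mem_nhds_zero hK)) ha
  calc
    (b • v) ⬝ᵥ y = b * (y ⬝ᵥ v) := by rw [smul_dotProduct, smul_eq_mul, dotProduct_comm]
    _ ≤ b := mul_le_of_le_one_right hb.le (hv y hy)
    _ ≤ a := hba.le

theorem gauge_polarBody_pos (hK : IsCompact K) (hint : (interior K).Nonempty)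
    (hsymm : ∀ y ∈ K, -y ∈ K) (hu : u ≠ 0) : 0 < gauge (polarBody K) u := by
  obtain ⟨y, hy⟩ := hint
  have eventually_mem : ∀ᶠ t : ℝ in 𝓝[>] 0, y + t • u ∈ K :=
    ((Continuous.tendsto' (by fun_prop) 0 y (by simp)).eventually
      (mem_interior_iff_mem_nhds.1 hy)).filter_mono nhdsWithin_le_nhds
  obtain ⟨t, hmem, ht : 0 < t⟩ := (eventually_mem.and self_mem_nhdsWithin).exists
  have width : 0 < u ⬝ᵥ (y + t • u) + u ⬝ᵥ (-y) := by
    have : 0 < t * (u ⬝ᵥ u) := mul_pos ht (by simpa using dotProduct_star_self_pos_iff.2 hu)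
    simpa only [dotProduct_add, dotProduct_neg, dotProduct_smul, smul_eq_mul,
      add_neg_cancel_comm] using this
  linarith [dotProduct_le_gauge_polarBody (u := u) hK hmem,
    dotProduct_le_gauge_polarBody (u := u) hK (hsymm y (interior_subset hy))]

theorem exists_dotProduct_eq_of_abs_le_gauge_polarBody (hK : IsCompact K) (hconv : Convex ℝ K)
    (hne : K.Nonempty) (hsymm : ∀ y ∈ K, -y ∈ K) {t : ℝ} (ht : |t| ≤ gauge (polarBody K) u) :
    ∃ y ∈ K, u ⬝ᵥ y = t := by
  have hcont : ContinuousOn (u ⬝ᵥ ·) K := by fun_prop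
  obtain ⟨y, hy, hmax⟩ := hK.exists_isMaxOn hne hcont
  have neg_le : u ⬝ᵥ (-y) ≤ u ⬝ᵥ y := hmax (hsymm y hy)
  rw [dotProduct_neg] at neg_le
  have gauge_le : gauge (polarBody K) u ≤ u ⬝ᵥ y :=
    gauge_polarBody_le (by linarith) fun z hz => hmax hz
  refine hconv.isPreconnected.intermediate_value (hsymm y hy) hy hcont ?_
  rw [dotProduct_neg]
  exact abs_le.1 (ht.trans gauge_le)

end PolarGauge

section NonSeparability

theorem exists_mem_addSubgroup_abs_sub_le (G : AddSubgroup ℝ) {r : ℝ} (hr : 0 < r)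
    (hG : ∀ g, G = AddSubgroup.zmultiples g → g ≠ 0 ∧ |g| ≤ 2 * r) (c : ℝ) :
    ∃ x ∈ G, |c - x| ≤ r := by
  rcases G.dense_or_cyclic with hdense | ⟨g, hg⟩
  · obtain ⟨x, hx, hcx⟩ := hdense.exists_dist_lt c hr
    exact ⟨x, hx, hcx.le⟩
  · rw [← AddSubgroup.zmultiples_eq_closure] at hg
    refine ⟨round (c / g) • g, hg ▸ AddSubgroup.zsmul_mem_zmultiples g _, ?_⟩
    obtain ⟨hg0, hgr⟩ := hG g hg
    calc
      |c - round (c / g) • g| = |c / g - round (c / g)| * |g| := by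
        rw [← abs_mul, sub_mul, div_mul_cancel₀ c hg0, zsmul_eq_mul]
      _ ≤ 1 / 2 * (2 * r) := by gcongr; exact abs_sub_round _
      _ = r := by ring

variable {n : ℕ} {K : Set (Fin n → ℝ)} {P : Matrix (Fin n) (Fin n) ℝ}

theorem exists_mem_latticeOf_eq_smul (hP : P.det ≠ 0) {u : Fin n → ℝ} {g : ℝ}
    (hg : ∀ i, (P⁻¹ *ᵥ u) i ∈ AddSubgroup.zmultiples g) : ∃ w ∈ latticeOf P, u = g • w := by
  choose k hk using fun i => AddSubgroup.mem_zmultiples_iff.1 (hg i)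
  have coords : P⁻¹ *ᵥ u = g • fun i => (k i : ℝ) := by
    ext i
    rw [← hk i, zsmul_eq_mul, Pi.smul_apply, smul_eq_mul, mul_comm]
  refine ⟨_, ⟨k, rfl⟩, ?_⟩
  rw [← mulVec_smul, ← coords, mulVec_mulVec, mul_nonsing_inv _ hP.isUnit, one_mulVec]

theorem nonSeparable_latticeOf_two_smul_inv_transpose (hK : IsCompact K) (hconv : Convex ℝ K)
    (hint : (interior K).Nonempty) (hsymm : ∀ y ∈ K, -y ∈ K) (hP : P.det ≠ 0)
    (hmin : ∀ w ∈ latticeOf P, w ≠ 0 → 1 ≤ gauge (polarBody K) w) :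
    NonSeparable (latticeOf ((2 : ℝ) • P⁻¹ᵀ)) K := by
  intro u hu c
  let G := (Submodule.span ℤ (range (P⁻¹ *ᵥ u))).toAddSubgroup
  have generator_bounds (g : ℝ) (hg : G = AddSubgroup.zmultiples g) :
      g ≠ 0 ∧ |g| ≤ 2 * (gauge (polarBody K) u / 2) := by
    obtain ⟨w, hw, rfl⟩ := exists_mem_latticeOf_eq_smul hP (u := u) (g := g)
      fun i => hg ▸ Submodule.subset_span (mem_range_self i)
    rw [gauge_smul (balanced_polarBody hsymm), mul_div_cancel₀ _ two_ne_zero, Real.norm_eq_abs]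
    exact ⟨left_ne_zero_of_smul hu,
      le_mul_of_one_le_right (abs_nonneg g) (hmin w hw (right_ne_zero_of_smul hu))⟩
  obtain ⟨x, hx, hcx⟩ := exists_mem_addSubgroup_abs_sub_le G
    (half_pos (gauge_polarBody_pos hK hint hsymm hu)) generator_bounds (c / 2)
  obtain ⟨m, rfl⟩ := (Submodule.mem_span_range_iff_exists_fun ℤ).1 hx
  have projection : u ⬝ᵥ (((2 : ℝ) • P⁻¹ᵀ) *ᵥ fun i => (m i : ℝ)) =
      2 * ∑ i, m i • (P⁻¹ *ᵥ u) i := by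
    rw [smul_mulVec, dotProduct_smul, dotProduct_mulVec, vecMul_transpose, smul_eq_mul]
    simp only [dotProduct, zsmul_eq_mul, mul_comm]
  have near : |c - 2 * ∑ i, m i • (P⁻¹ *ᵥ u) i| ≤ gauge (polarBody K) u := by
    rw [abs_le] at hcx ⊢
    constructor <;> linarith
  obtain ⟨y, hy, huy⟩ := exists_dotProduct_eq_of_abs_le_gauge_polarBody hK hconv
    (hint.mono interior_subset) hsymm near
  refine ⟨_, ⟨m, rfl⟩, y, hy, ?_⟩
  rw [dotProduct_add, projection, huy, add_sub_cancel]

theorem dTrans_le_of_nonSeparable {A : Matrix (Fin n) (Fin n) ℝ} (hA : A.det ≠ 0)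
    (h : NonSeparable (latticeOf A) K) : dTrans K ≤ (volume K).toReal / |A.det| := by
  refine csInf_le ⟨0, ?_⟩ ⟨A, hA, h, rfl⟩
  rintro _ ⟨B, -, -, rfl⟩
  positivity

theorem dTrans_le_volume_mul_abs_det_div_two_pow (hK : IsCompact K) (hconv : Convex ℝ K)
    (hint : (interior K).Nonempty) (hsymm : ∀ y ∈ K, -y ∈ K) (hP : P.det ≠ 0)
    (hmin : ∀ w ∈ latticeOf P, w ≠ 0 → 1 ≤ gauge (polarBody K) w) :
    dTrans K ≤ (volume K).toReal * |P.det| / 2 ^ n := by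
  have hdet : ((2 : ℝ) • P⁻¹ᵀ).det = 2 ^ n / P.det := by
    rw [det_smul, Fintype.card_fin, det_transpose, det_nonsing_inv, Ring.inverse_eq_inv',
      div_eq_mul_inv]
  have hdet_ne : ((2 : ℝ) • P⁻¹ᵀ).det ≠ 0 := hdet ▸ div_ne_zero (by positivity) hP
  refine (dTrans_le_of_nonSeparable hdet_ne
    (nonSeparable_latticeOf_two_smul_inv_transpose hK hconv hint hsymm hP hmin)).trans_eq ?_
  rw [hdet, abs_div, abs_of_pos (by positivity : (0 : ℝ) < 2 ^ n), div_div_eq_mul_div]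

end NonSeparability

section Triangle

theorem volume_parallelepiped_pi {ι : Type*} [Fintype ι] [DecidableEq ι] (v : ι → ι → ℝ) :
    volume (parallelepiped v) = ENNReal.ofReal |(Matrix.of v).det| := by
  rw [← addHaarMeasure_eq_volume_pi, ← Module.Basis.parallelepiped_basisFun,
    ← Module.Basis.addHaar_def, Measure.addHaar_parallelepiped, Pi.basisFun_det_apply]

theorem combo_mem_convexHull_triple {E : Type*} [AddCommGroup E] [Module ℝ E] (a b c : E)
    {x y : ℝ} (hx : 0 ≤ x) (hy : 0 ≤ y) (hxy : x + y ≤ 1) :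
    a + x • (b - a) + y • (c - a) ∈ convexHull ℝ {a, b, c} := by
  refine mem_convexHull_of_exists_fintype ![1 - x - y, x, y] ![a, b, c] ?_ ?_ ?_ ?_
  · rw [Fin.forall_fin_succ, Fin.forall_fin_two]
    exact ⟨by simp only [cons_val]; linarith, hx, hy⟩
  · simp only [Fin.sum_univ_three, cons_val]
    ring
  · simp [Fin.forall_fin_succ]
  · simp only [Fin.sum_univ_three, cons_val]
    module

theorem parallelepiped_sub_sub_subset {E : Type*} [AddCommGroup E] [Module ℝ E] (a b c : E) :
    parallelepiped ![b - a, c - a] ⊆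
      (a + ·) ⁻¹' convexHull ℝ {a, b, c} ∪ (b + c - a - ·) ⁻¹' convexHull ℝ {a, b, c} := by
  intro z hz
  obtain ⟨t, ⟨ht0, ht1⟩, rfl⟩ := (mem_parallelepiped_iff _ _).1 hz
  have h00 : 0 ≤ t 0 := ht0 0
  have h01 : 0 ≤ t 1 := ht0 1
  have h10 : t 0 ≤ 1 := ht1 0
  have h11 : t 1 ≤ 1 := ht1 1
  simp only [Fin.sum_univ_two, cons_val_zero, cons_val_one, mem_union, mem_preimage]
  rcases le_total (t 0 + t 1) 1 with hle | hge
  · left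
    convert combo_mem_convexHull_triple a b c h00 h01 hle using 1
    module
  · right
    convert combo_mem_convexHull_triple a b c (sub_nonneg.2 h10) (sub_nonneg.2 h11)
      (by linarith) using 1
    module

theorem abs_det_le_two_mul_volume_convexHull (a b c : Fin 2 → ℝ) :
    |(Matrix.of ![b - a, c - a]).det| ≤ 2 * (volume (convexHull ℝ {a, b, c})).toReal := by
  have hfin : volume (convexHull ℝ {a, b, c}) ≠ ⊤ :=
    (Set.toFinite {a, b, c}).isCompact_convexHull ℝ |>.measure_ne_top
  rw [← ENNReal.toReal_ofNat, ← ENNReal.toReal_mul,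
    ← ENNReal.ofReal_le_iff_le_toReal (ENNReal.mul_ne_top ENNReal.ofNat_ne_top hfin),
    ← volume_parallelepiped_pi]
  have volume_reflection : volume ((b + c - a - ·) ⁻¹' convexHull ℝ {a, b, c}) =
      volume (convexHull ℝ {a, b, c}) :=
    (Measure.measurePreserving_sub_left volume (b + c - a)).measure_preimage
      ((convex_convexHull ℝ _).nullMeasurableSet volume)
  calc
    volume (parallelepiped ![b - a, c - a])
      ≤ volume ((a + ·) ⁻¹' convexHull ℝ {a, b, c}) +
          volume ((b + c - a - ·) ⁻¹' convexHull ℝ {a, b, c}) :=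
      (measure_mono (parallelepiped_sub_sub_subset a b c)).trans (measure_union_le _ _)
    _ = 2 * volume (convexHull ℝ {a, b, c}) := by
      rw [measure_preimage_add, volume_reflection, two_mul]

theorem det_sub_sub_ne_zero_of_not_collinear {a b c : Fin 2 → ℝ}
    (h : ¬Collinear ℝ {a, b, c}) : (Matrix.of ![b - a, c - a]).det ≠ 0 := by
  rw [← affineIndependent_iff_not_collinear_set, affineIndependent_iff_linearIndependent_vsub ℝ _ 0,
    ← linearIndependent_equiv (finSuccAboveEquiv 0)] at h
  rw [← isUnit_iff_ne_zero, ← isUnit_iff_isUnit_det, ← linearIndependent_rows_iff_isUnit]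
  have rows : (Matrix.of ![b - a, c - a]).row =
      (fun i : {i : Fin 3 // i ≠ 0} => ![a, b, c] i -ᵥ ![a, b, c] 0) ∘ finSuccAboveEquiv 0 := by
    ext i
    fin_cases i <;> rfl
  exact rows ▸ h

theorem det_sub_sub_of_add_add_eq_zero {a b c : Fin 2 → ℝ} (h : a + b + c = 0) :
    (Matrix.of ![b - a, c - a]).det = 3 * (Matrix.of ![a, b])ᵀ.det := by
  obtain rfl : c = -(a + b) := (neg_eq_of_add_eq_zero_right h).symm
  simp only [det_fin_two, transpose_apply, of_apply, cons_val, Pi.sub_apply, Pi.neg_apply,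
    Pi.add_apply]
  ring

end Triangle

theorem d21_le_of_central_triangle_general (K : Set (Fin 2 → ℝ))
    (hKc : IsCompact K) (hKconv : Convex ℝ K) (hKint : (interior K).Nonempty)
    (hsymm : K = -K)
    (p₁ p₂ p₃ : Fin 2 → ℝ)
    (hp₁ : p₁ ∈ frontier (polarBody K)) (hp₂ : p₂ ∈ frontier (polarBody K))
    (hp₃ : p₃ ∈ frontier (polarBody K))
    (hnd : ¬ Collinear ℝ ({p₁, p₂, p₃} : Set (Fin 2 → ℝ)))
    (hbary : p₁ + p₂ + p₃ = 0) :
    dTrans K ≤ (volume K).toReal *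
      (volume (convexHull ℝ ({p₁, p₂, p₃} : Set (Fin 2 → ℝ)))).toReal / 6 := by
  have neg_mem : ∀ y ∈ K, -y ∈ K := fun _ hy => hsymm.subset hy
  have polar_nhds := polarBody_mem_nhds_zero hKc
  let N : Seminorm ℝ (Fin 2 → ℝ) := gaugeSeminorm (balanced_polarBody neg_mem)
    (convex_polarBody K) (absorbent_nhds_zero polar_nhds)
  have N_eq_one {p : Fin 2 → ℝ} (hp : p ∈ frontier (polarBody K)) : N p = 1 :=
    (gauge_eq_one_iff_mem_frontier (convex_polarBody K) polar_nhds).2 hp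
  have N_add : N (p₁ + p₂) = 1 := by
    rw [eq_neg_of_add_eq_zero_left hbary, map_neg_eq_map, N_eq_one hp₃]
  have det_eq := det_sub_sub_of_add_add_eq_zero hbary
  have det_ne : (Matrix.of ![p₁, p₂])ᵀ.det ≠ 0 :=
    right_ne_zero_of_mul (det_eq ▸ det_sub_sub_ne_zero_of_not_collinear hnd)
  have density_le := dTrans_le_volume_mul_abs_det_div_two_pow hKc hKconv hKint neg_mem det_ne
    fun w hw hw0 => (N_eq_one hp₁).symm.trans_le (le_seminorm_of_mem_latticeOf N
      ((N_eq_one hp₁).trans (N_eq_one hp₂).symm) ((N_eq_one hp₁).trans N_add.symm) hw hw0)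
  have area_ge := abs_det_le_two_mul_volume_convexHull p₁ p₂ p₃
  rw [det_eq, abs_mul, abs_of_pos (by norm_num : (0 : ℝ) < 3)] at area_ge
  linarith [mul_le_mul_of_nonneg_left area_ge (ENNReal.toReal_nonneg (a := volume K))]

/-- If `K ⊆ ℝ²` is a centrally symmetric convex body and there is a central triangle `T°`
(vertices on `∂K°`, barycenter at the origin) with `|K|·|T°| ≤ (3√3/4)π`,
then `d_{2,1}(K) ≤ √3·π/8`. -/
theorem d21_le_of_central_triangle (K : Set (Fin 2 → ℝ))
    (hKc : IsCompact K) (hKconv : Convex ℝ K) (hKint : (interior K).Nonempty)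
    (hsymm : K = -K)
    (p₁ p₂ p₃ : Fin 2 → ℝ)
    (hp₁ : p₁ ∈ frontier (polarBody K)) (hp₂ : p₂ ∈ frontier (polarBody K))
    (hp₃ : p₃ ∈ frontier (polarBody K))
    (hnd : ¬ Collinear ℝ ({p₁, p₂, p₃} : Set (Fin 2 → ℝ)))
    (hbary : p₁ + p₂ + p₃ = 0)
    (harea : (volume K).toReal *
        (volume (convexHull ℝ ({p₁, p₂, p₃} : Set (Fin 2 → ℝ)))).toReal ≤
      3 * Real.sqrt 3 / 4 * Real.pi) :
    dTrans K ≤ Real.sqrt 3 * Real.pi / 8 := by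
  linarith [d21_le_of_central_triangle_general K hKc hKconv hKint hsymm p₁ p₂ p₃ hp₁ hp₂ hp₃
    hnd hbary]
end
end

section
/- For a convex body K in ℝⁿ, the lattice of translates ℤⁿ + K is non-separable if and only if the lattice width ω_K(u) := max_{x,y∈K} ⟨u, x−y⟩ satisfies ω_K(u) ≥ 1 for every u ∈ ℤⁿ \ {0}. -/
open MeasureTheory Set Matrix Pointwise

noncomputable section

/-- The integer lattice `ℤⁿ ⊆ ℝⁿ`. -/
def intLattice (n : ℕ) : Set (Fin n → ℝ) :=
  Set.range fun m : Fin n → ℤ => fun i => (m i : ℝ)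

/-- The lattice width of `K` at `u`: `ω_K(u) = max_{x,y ∈ K} ⟨u, x−y⟩`. -/
def latticeWidth {n : ℕ} (K : Set (Fin n → ℝ)) (u : Fin n → ℤ) : ℝ :=
  sSup {r : ℝ | ∃ x ∈ K, ∃ y ∈ K, r = (fun i => (u i : ℝ)) ⬝ᵥ (x - y)}

/-!
Fix a normal vector `u`. A hyperplane `⟨u, y⟩ = c` meets `ℤⁿ + K` exactly when `c` lies in
`G + S`, where the shadow `S = ⟨u, K⟩` is a compact interval and `G = ⟨u, ℤⁿ⟩` is the subgroup of
`ℝ` generated by the coordinates of `u`. A subgroup of `ℝ` is dense or cyclic. If `G` is dense,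
then `G + S = ℝ` because `S` has interior. If `G = gℤ` with `g > 0`, then `G + S = ℝ` amounts to
`g ≤ |S|`, and `u = g k` with `k` integral turns this into `1 ≤ ω_K(k)`.
-/

section Group

variable {G : Type*}

theorem dense_add_eq_univ_of_interior_nonempty [AddGroup G] [TopologicalSpace G]
    [IsTopologicalAddGroup G] {s t : Set G} (hs : Dense s) (ht : (interior t).Nonempty) :
    s + t = univ := by
  refine univ_subset_iff.mp ?_
  calc univ = closure s + interior t := by rw [hs.closure_eq, univ_add ht]
    _ = s + interior t := isOpen_interior.closure_add s
    _ ⊆ s + t := add_subset_add_left interior_subset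

variable [AddCommGroup G] [LinearOrder G] [IsOrderedAddMonoid G] [Archimedean G]

theorem zmultiples_add_Icc_eq_univ_iff [DenselyOrdered G] {g : G} (hg : 0 < g) {a b : G} :
    (AddSubgroup.zmultiples g : Set G) + Icc a b = univ ↔ g ≤ b - a := by
  constructor
  · intro hcover
    by_contra! hlt
    obtain ⟨c, hbc, hca⟩ := exists_between (sub_lt_iff_lt_add'.mp hlt)
    obtain ⟨_, ⟨m, rfl⟩, s, ⟨has, hsb⟩, hc⟩ := hcover.symm.subset (mem_univ c)
    have hmg : m • g = c - s := eq_sub_of_add_eq hc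
    have hm_pos : 0 < m := (zsmul_lt_zsmul_iff_left hg).mp <| by
      rw [zero_zsmul, hmg]
      exact sub_pos.mpr (hsb.trans_lt hbc)
    have hm_lt_one : m < 1 := (zsmul_lt_zsmul_iff_left hg).mp <| by
      rw [one_zsmul, hmg, sub_lt_iff_lt_add']
      exact hca.trans_le (add_le_add_left has g)
    lia
  · intro hle
    refine eq_univ_of_forall fun c ↦ ?_
    obtain ⟨m, ⟨ham, hmb⟩, -⟩ := existsUnique_sub_zsmul_mem_Ico hg c a
    exact ⟨m • g, ⟨m, rfl⟩, c - m • g, ⟨ham, hmb.le.trans (le_sub_iff_add_le'.mp hle)⟩,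
      add_sub_cancel _ _⟩

theorem dense_or_exists_pos_eq_zmultiples [TopologicalSpace G] [OrderTopology G]
    {H : AddSubgroup G} (hH : H ≠ ⊥) :
    Dense (H : Set G) ∨ ∃ g, 0 < g ∧ H = AddSubgroup.zmultiples g := by
  refine H.dense_or_cyclic.imp_right ?_
  rintro ⟨g, rfl⟩
  rw [← AddSubgroup.zmultiples_eq_closure] at hH ⊢
  exact ⟨|g|, abs_pos.mpr (mt AddSubgroup.zmultiples_eq_bot.mpr hH), (zmultiples_abs g).symm⟩

end Group

section Shadow

variable {ι : Type*} [Fintype ι]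

/-- The projection of `K` to the line in direction `u`, as the set of values of `⟨u, ·⟩` on `K`.
The hyperplane `⟨u, y⟩ = c` meets `K` exactly when `c ∈ shadow u K`. -/
def shadow (u : ι → ℝ) (K : Set (ι → ℝ)) : Set ℝ :=
  (u ⬝ᵥ ·) '' K

theorem shadow_smul (g : ℝ) (u : ι → ℝ) (K : Set (ι → ℝ)) :
    shadow (g • u) K = g • shadow u K := by
  simp only [shadow, smul_dotProduct, ← image_smul, image_image]

variable {K : Set (ι → ℝ)}

theorem isCompact_shadow (hK : IsCompact K) (u : ι → ℝ) : IsCompact (shadow u K) :=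
  hK.image (by fun_prop)

theorem isBounded_shadow (hK : Bornology.IsBounded K) (u : ι → ℝ) :
    Bornology.IsBounded (shadow u K) :=
  (isCompact_shadow hK.isCompact_closure u).isBounded.subset (image_mono subset_closure)

theorem shadow_eq_Icc (hK : IsCompact K) (hconn : IsConnected K) (u : ι → ℝ) :
    shadow u K = Icc (sInf (shadow u K)) (sSup (shadow u K)) :=
  eq_Icc_of_connected_compact (hconn.image _ (by fun_prop)) (isCompact_shadow hK u)

theorem shadow_nontrivial (hspan : affineSpan ℝ K = ⊤) {u : ι → ℝ} (hu : u ≠ 0) :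
    (shadow u K).Nontrivial := by
  classical
  rw [← not_subsingleton_iff]
  intro hsub
  let f : (ι → ℝ) →ᵃ[ℝ] ℝ := (dotProductEquiv ℝ ι u).toAffineMap
  have hf : Function.Surjective f :=
    LinearMap.surjective ((dotProductEquiv ℝ ι).map_ne_zero_iff.mpr hu)
  exact not_subsingleton ℝ
    (AffineSubspace.subsingleton_of_subsingleton_span_eq_top hsub
      (f.span_eq_top_of_surjective hf hspan))

theorem interior_shadow_nonempty (hconn : IsPreconnected K) (hspan : affineSpan ℝ K = ⊤)
    {u : ι → ℝ} (hu : u ≠ 0) : (interior (shadow u K)).Nonempty := by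
  have hconvex : Convex ℝ (shadow u K) :=
    Real.convex_iff_isPreconnected.mpr (hconn.image _ (by fun_prop))
  exact hconvex.nontrivial_iff_nonempty_interior.mp (shadow_nontrivial hspan hu)

end Shadow

section IntegerCombinations

variable {ι : Type*}

theorem mem_closure_range_iff_exists_dotProduct [Fintype ι] {u : ι → ℝ} {r : ℝ} :
    r ∈ AddSubgroup.closure (range u) ↔ ∃ m : ι → ℤ, u ⬝ᵥ (fun i ↦ (m i : ℝ)) = r := by
  simp only [AddSubgroup.mem_closure_range_iff_of_fintype, dotProduct, zsmul_eq_mul, mul_comm,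
    eq_comm]

theorem exists_eq_smul_intCast {u : ι → ℝ} {g : ℝ}
    (hu : ∀ i, u i ∈ AddSubgroup.zmultiples g) : ∃ k : ι → ℤ, u = g • fun i ↦ (k i : ℝ) := by
  choose k hk using hu
  refine ⟨k, funext fun i ↦ ?_⟩
  simp [← hk i, mul_comm]

end IntegerCombinations

section LatticeWidth

variable {n : ℕ} {K : Set (Fin n → ℝ)}

theorem nonSeparable_intLattice_iff :
    NonSeparable (intLattice n) K ↔
      ∀ u ≠ 0, (AddSubgroup.closure (range u) : Set ℝ) + shadow u K = univ := by
  simp only [NonSeparable, intLattice, shadow, eq_univ_iff_forall, mem_add, SetLike.mem_coe,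
    mem_closure_range_iff_exists_dotProduct, exists_exists_eq_and, exists_mem_image,
    exists_range_iff, dotProduct_add]

theorem latticeWidth_eq_sSup_sub_sInf (hK : Bornology.IsBounded K) (hne : K.Nonempty)
    (k : Fin n → ℤ) :
    latticeWidth K k =
      sSup (shadow (fun i ↦ (k i : ℝ)) K) - sInf (shadow (fun i ↦ (k i : ℝ)) K) := by
  have hbdd := isBounded_shadow hK fun i ↦ (k i : ℝ)
  have hne' : (shadow (fun i ↦ (k i : ℝ)) K).Nonempty := hne.image _
  rw [← csSup_sub hne' hbdd.bddAbove hne' hbdd.bddBelow, latticeWidth]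
  congr 1 with r
  simp only [shadow, mem_sub, exists_mem_image, mem_ofPred_eq, dotProduct_sub, eq_comm]

theorem one_le_latticeWidth_of_nonSeparable (hK : Bornology.IsBounded K)
    (hsep : NonSeparable (intLattice n) K) {k : Fin n → ℤ} (hk : k ≠ 0) :
    1 ≤ latticeWidth K k := by
  set v : Fin n → ℝ := fun i ↦ (k i : ℝ)
  have hv : v ≠ 0 := fun h ↦ hk (funext fun i ↦ Int.cast_eq_zero.mp (congrFun h i))
  have hcover := nonSeparable_intLattice_iff.mp hsep v hv
  have hne : K.Nonempty :=
    (hcover ▸ univ_nonempty : (_ + shadow v K).Nonempty).of_add_right.of_image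
  have hbdd := isBounded_shadow hK v
  have hvalues : AddSubgroup.closure (range v) ≤ AddSubgroup.zmultiples 1 := by
    rw [AddSubgroup.closure_le]
    rintro _ ⟨i, rfl⟩
    exact ⟨k i, by simp [v]⟩
  rw [latticeWidth_eq_sSup_sub_sInf hK hne,
    ← zmultiples_add_Icc_eq_univ_iff one_pos, ← univ_subset_iff, ← hcover]
  exact add_subset_add hvalues (subset_Icc_csInf_csSup hbdd.bddBelow hbdd.bddAbove)

theorem zmultiples_add_shadow_smul_eq_univ (hK : IsCompact K) (hconn : IsConnected K) {g : ℝ}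
    (hg : 0 < g) {k : Fin n → ℤ} (hk : 1 ≤ latticeWidth K k) :
    (AddSubgroup.zmultiples g : Set ℝ) + shadow (g • fun i ↦ (k i : ℝ)) K = univ := by
  set v : Fin n → ℝ := fun i ↦ (k i : ℝ)
  rw [shadow_eq_Icc hK hconn, zmultiples_add_Icc_eq_univ_iff hg]
  calc g ≤ g * latticeWidth K k := le_mul_of_one_le_right hg.le hk
    _ = g * sSup (shadow v K) - g * sInf (shadow v K) := by
      rw [latticeWidth_eq_sSup_sub_sInf hK.isBounded hconn.nonempty, mul_sub]
    _ = sSup (shadow (g • v) K) - sInf (shadow (g • v) K) := by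
      rw [shadow_smul, Real.sSup_smul_of_nonneg hg.le, Real.sInf_smul_of_nonneg hg.le,
        smul_eq_mul, smul_eq_mul]

theorem nonSeparable_of_one_le_latticeWidth (hK : IsCompact K) (hconn : IsPreconnected K)
    (hspan : affineSpan ℝ K = ⊤) (hwidth : ∀ k : Fin n → ℤ, k ≠ 0 → 1 ≤ latticeWidth K k) :
    NonSeparable (intLattice n) K := by
  refine nonSeparable_intLattice_iff.mpr fun u hu ↦ ?_
  have hinterior := interior_shadow_nonempty hconn hspan hu
  have hgroup : AddSubgroup.closure (range u) ≠ ⊥ := fun h ↦ hu <| funext fun i ↦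
    AddSubgroup.closure_eq_bot_iff.mp h (mem_range_self i)
  rcases dense_or_exists_pos_eq_zmultiples hgroup with hdense | ⟨g, hg, hcyclic⟩
  · exact dense_add_eq_univ_of_interior_nonempty hdense hinterior
  · obtain ⟨k, rfl⟩ := exists_eq_smul_intCast (u := u) (g := g) fun i ↦
      hcyclic ▸ AddSubgroup.subset_closure (mem_range_self i)
    have hk : k ≠ 0 := by
      rintro rfl
      exact hu (by ext; simp)
    have hne : K.Nonempty := image_nonempty.mp (hinterior.mono interior_subset)
    rw [hcyclic]
    exact zmultiples_add_shadow_smul_eq_univ hK ⟨hne, hconn⟩ hg (hwidth k hk)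

theorem nonSeparable_iff_latticeWidth_general (hK : IsCompact K) (hconn : IsPreconnected K)
    (hspan : affineSpan ℝ K = ⊤) :
    NonSeparable (intLattice n) K ↔ ∀ u : Fin n → ℤ, u ≠ 0 → 1 ≤ latticeWidth K u :=
  ⟨fun hsep _ hu ↦ one_le_latticeWidth_of_nonSeparable hK.isBounded hsep hu,
    nonSeparable_of_one_le_latticeWidth hK hconn hspan⟩

end LatticeWidth

/-- `ℤⁿ + K` is non-separable iff `ω_K(u) ≥ 1` for all `u ∈ ℤⁿ \ {0}`. -/
theorem nonSeparable_iff_latticeWidth {n : ℕ} (K : Set (Fin n → ℝ))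
    (hKc : IsCompact K) (hKconv : Convex ℝ K) (hKint : (interior K).Nonempty) :
    NonSeparable (intLattice n) K ↔ ∀ u : Fin n → ℤ, u ≠ 0 → 1 ≤ latticeWidth K u :=
  nonSeparable_iff_latticeWidth_general hKc hKconv.isPreconnected
    (hKconv.interior_nonempty_iff_affineSpan_eq_top.mp hKint)
end
end

section
/- Let K be a centrally symmetric convex body in ℝⁿ. Then ℤⁿ is *critical for K (i.e., ℤⁿ + K is non-separable and d(ℤⁿ) = Δ*(K)) if and only if ℤⁿ is critical for (1/2)K° (i.e., ℤⁿ is (1/2)K°-admissible and d(ℤⁿ) = Δ((1/2)K°)). -/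
open MeasureTheory Set Matrix Pointwise

noncomputable section

/-- A set `Λ` is `K`-admissible if it meets the interior of `K` only in `0`. -/
def Admissible {n : ℕ} (Λ K : Set (Fin n → ℝ)) : Prop :=
  Λ ∩ interior K = {0}

/-- The critical determinant `Δ(K)`: the smallest determinant of a `K`-admissible lattice. -/
def critDet {n : ℕ} (K : Set (Fin n → ℝ)) : ℝ :=
  sInf {d : ℝ | ∃ A : Matrix (Fin n) (Fin n) ℝ, A.det ≠ 0 ∧
    Admissible (latticeOf A) K ∧ d = |A.det|}

/-- The densest lattice packing density `δ_L(K) = |K| / (2ⁿ Δ(K))` of a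
centrally symmetric convex body `K ⊆ ℝⁿ`. -/
def deltaL {n : ℕ} (K : Set (Fin n → ℝ)) : ℝ :=
  (volume K).toReal / (2 ^ n * critDet K)

/-- The *critical determinant `Δ*(K)`: the largest determinant of a lattice `Λ`
with `Λ + K` non-separable. -/
def starCritDet {n : ℕ} (K : Set (Fin n → ℝ)) : ℝ :=
  sSup {d : ℝ | ∃ A : Matrix (Fin n) (Fin n) ℝ, A.det ≠ 0 ∧
    NonSeparable (latticeOf A) K ∧ d = |A.det|}

/-!
Fix `u ≠ 0`. The hyperplane `{⟨u, ·⟩ = c}` meets a translate `x + K` iff `c - ⟨u, x⟩` lies in the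
interval `⟨u, K⟩`, so non-separability says that the translates of this symmetric interval by the
subgroup `⟨u, Λ⟩ ≤ ℝ` cover `ℝ`. If the subgroup is dense this is automatic; otherwise it is `ℤa`,
and for `a ≠ 0` covering means that the interval has half-length at least `|a| / 2`, i.e. that the
vector `a⁻¹u` of the dual lattice `Λ*` lies outside `int (½K°)`. Hence `Λ + K` is non-separable iff
`Λ*` is `½K°`-admissible. As `d(Λ*) = d(Λ)⁻¹`, this gives `Δ(½K°) = Δ*(K)⁻¹`, and `ℤⁿ` is its own
dual.
-/

theorem sInf_inv_eq_inv_sSup_of_pos {s : Set ℝ} (hs : ∀ x ∈ s, 0 < x) :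
    sInf s⁻¹ = (sSup s)⁻¹ := by
  rcases s.eq_empty_or_nonempty with rfl | hne
  · simp
  have inv_mem_upperBounds : ∀ b ∈ lowerBounds s⁻¹, 0 < b → b⁻¹ ∈ upperBounds s :=
    fun b hb hb0 x hx => le_inv_of_le_inv₀ hb0 (hb (Set.inv_mem_inv.2 hx))
  refine IsGLB.csInf_eq ⟨fun x hx => ?_, fun b hb => ?_⟩ hne.inv
  · by_cases hbdd : BddAbove s
    · exact inv_le_of_inv_le₀ (inv_pos.1 (hs _ hx)) (le_csSup hbdd hx)
    · rw [Real.sSup_of_not_bddAbove hbdd, _root_.inv_zero]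
      exact (inv_pos.1 (hs _ hx)).le
  · rcases le_or_gt b 0 with hb0 | hb0
    · exact hb0.trans (inv_nonneg.2 (Real.sSup_nonneg fun x hx => (hs x hx).le))
    · have hub := inv_mem_upperBounds b hb hb0
      obtain ⟨x, hx⟩ := hne
      exact le_inv_of_le_inv₀ ((hs x hx).trans_le (le_csSup ⟨_, hub⟩ hx)) (csSup_le ⟨x, hx⟩ hub)

theorem abs_sub_round_div_mul_le {𝕜 : Type*} [Field 𝕜] [LinearOrder 𝕜] [IsStrictOrderedRing 𝕜]
    [FloorRing 𝕜] {a : 𝕜} (ha : a ≠ 0) (c : 𝕜) : |c - round (c / a) * a| ≤ |a| / 2 :=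
  calc |c - round (c / a) * a| = |c / a - round (c / a)| * |a| := by
        rw [← abs_mul, sub_mul, div_mul_cancel₀ _ ha]
    _ ≤ 1 / 2 * |a| := by gcongr; exact abs_sub_round _
    _ = |a| / 2 := by ring

theorem exists_dotProduct_ne_zero_of_span_eq_top {R ι : Type*} [CommSemiring R] [Fintype ι]
    {K : Set (ι → R)} (hspan : Submodule.span R K = ⊤) {u : ι → R} (hu : u ≠ 0) :
    ∃ y ∈ K, u ⬝ᵥ y ≠ 0 := by
  by_contra! hzero
  have : dotProductBilin R R u = 0 := LinearMap.ext_on hspan hzero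
  exact hu (dotProduct_eq_zero u (LinearMap.congr_fun this))

section DotProduct

variable {ι : Type*} [Fintype ι] {K : Set (ι → ℝ)} {u y : ι → ℝ}

theorem exists_dotProduct_eq_of_abs_le (hconn : IsPreconnected K) (hsymm : K = -K) (hy : y ∈ K)
    {r : ℝ} (hr : |r| ≤ |u ⬝ᵥ y|) : ∃ z ∈ K, u ⬝ᵥ z = r := by
  have hneg : -y ∈ K := by rwa [hsymm, Set.neg_mem_neg]
  have himage : ((u ⬝ᵥ ·) '' K).OrdConnected :=
    (hconn.image _ (continuous_const.dotProduct continuous_id).continuousOn).ordConnected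
  refine himage.uIcc_subset (mem_image_of_mem _ hneg) (mem_image_of_mem _ hy) ?_
  rw [dotProduct_neg, mem_uIcc]
  grind

theorem exists_half_abs_le_abs_dotProduct {D : Set (ι → ℝ)}
    (h : ∀ v ∈ D, v ≠ 0 → ∃ y ∈ K, 2⁻¹ ≤ y ⬝ᵥ v) (hu : u ≠ 0)
    {a : ℝ} (ha : a ≠ 0) (hmem : a⁻¹ • u ∈ D) : ∃ y ∈ K, |a| / 2 ≤ |u ⬝ᵥ y| := by
  obtain ⟨y, hy, hle⟩ := h _ hmem (smul_ne_zero (inv_ne_zero ha) hu)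
  refine ⟨y, hy, ?_⟩
  calc |a| / 2 = |a| * 2⁻¹ := div_eq_mul_inv _ _
    _ ≤ |a| * |y ⬝ᵥ a⁻¹ • u| := by gcongr; exact hle.trans (le_abs_self _)
    _ = |u ⬝ᵥ y| := by
      rw [← abs_mul, dotProduct_smul, smul_eq_mul, mul_inv_cancel_left₀ ha, dotProduct_comm]

theorem isOpen_setOf_forall_dotProduct_lt (hK : IsCompact K) (c : ℝ) :
    IsOpen {x | ∀ y ∈ K, y ⬝ᵥ x < c} := by
  refine isOpen_iff_mem_nhds.2 fun x hx => hK.eventually_forall_of_forall_eventually fun y hy => ?_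
  exact (continuous_snd.dotProduct continuous_fst).continuousAt.eventually_lt
    continuousAt_const (hx y hy)

end DotProduct

section Polar

variable {n : ℕ} {K : Set (Fin n → ℝ)}

theorem interior_polarBody (hK : IsCompact K) :
    interior (polarBody K) = {x | ∀ y ∈ K, y ⬝ᵥ x < 1} := by
  refine Subset.antisymm (fun x hx y hy => ?_)
    (interior_maximal (fun x hx y hy => (hx y hy).le) (isOpen_setOf_forall_dotProduct_lt hK 1))
  have hray : Filter.Tendsto (fun t : ℝ => t • x) (nhdsWithin 1 (Ioi 1)) (nhds x) :=
    tendsto_nhdsWithin_of_tendsto_nhds (Continuous.tendsto' (by fun_prop) _ _ (one_smul ℝ x))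
  obtain ⟨t, htx, ht : 1 < t⟩ :=
    ((hray.eventually (mem_interior_iff_mem_nhds.1 hx)).and self_mem_nhdsWithin).exists
  have hle : t * (y ⬝ᵥ x) ≤ 1 := by simpa only [dotProduct_smul, smul_eq_mul] using htx y hy
  by_contra! hge
  nlinarith

theorem mem_interior_smul_polarBody (hK : IsCompact K) {c : ℝ} (hc : 0 < c) {x : Fin n → ℝ} :
    x ∈ interior (c • polarBody K) ↔ ∀ y ∈ K, y ⬝ᵥ x < c := by
  simp only [interior_smul₀ hc.ne', interior_polarBody hK, mem_smul_set_iff_inv_smul_mem₀ hc.ne',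
    mem_ofPred_eq, dotProduct_smul, smul_eq_mul, inv_mul_lt_one₀ hc]

theorem admissible_smul_polarBody_iff (hK : IsCompact K) {c : ℝ} (hc : 0 < c)
    {Λ : Set (Fin n → ℝ)} (hΛ : 0 ∈ Λ) :
    Admissible Λ (c • polarBody K) ↔ ∀ v ∈ Λ, v ≠ 0 → ∃ y ∈ K, c ≤ y ⬝ᵥ v := by
  have hzero : 0 ∈ Λ ∩ interior (c • polarBody K) :=
    ⟨hΛ, (mem_interior_smul_polarBody hK hc).2 fun y _ => by rwa [dotProduct_zero]⟩
  rw [Admissible, Set.eq_singleton_iff_unique_mem, and_iff_right hzero]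
  refine forall_congr' fun v => ?_
  rw [mem_inter_iff, mem_interior_smul_polarBody hK hc, and_imp]
  refine imp_congr_right fun _ => ?_
  rw [← not_imp_not]
  push Not
  rfl

end Polar

section DualLattice

variable {n : ℕ}

/-- The dual lattice `Λ* = {v | ⟨v, x⟩ ∈ ℤ for all x ∈ Λ}`, defined for an arbitrary set `Λ`. -/
def dualLattice (Λ : Set (Fin n → ℝ)) : Set (Fin n → ℝ) :=
  {v | ∀ x ∈ Λ, ∃ j : ℤ, v ⬝ᵥ x = j}

theorem zero_mem_dualLattice (Λ : Set (Fin n → ℝ)) : 0 ∈ dualLattice Λ :=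
  fun x _ => ⟨0, by rw [zero_dotProduct, Int.cast_zero]⟩

/-- The set `latticeOf A` as an additive subgroup of `ℝⁿ`. -/
def latticeSubgroup (A : Matrix (Fin n) (Fin n) ℝ) : AddSubgroup (Fin n → ℝ) :=
  (A.mulVecLin.toAddMonoidHom.comp ((Int.castAddHom ℝ).compLeft (Fin n))).range

theorem coe_latticeSubgroup (A : Matrix (Fin n) (Fin n) ℝ) :
    (latticeSubgroup A : Set (Fin n → ℝ)) = latticeOf A :=
  rfl

theorem dualLattice_latticeOf {A : Matrix (Fin n) (Fin n) ℝ} (hA : IsUnit A.det) :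
    dualLattice (latticeOf A) = latticeOf A⁻¹ᵀ := by
  refine Subset.antisymm (fun v hv => ?_) ?_
  · choose j hj using fun i => hv _ ⟨Pi.single i 1, rfl⟩
    have hcoord : v ᵥ* A = fun i => (j i : ℝ) := by
      ext i
      rw [← hj i, dotProduct_mulVec]
      simp [dotProduct, Pi.single_apply]
    refine ⟨j, ?_⟩
    beta_reduce
    rw [← hcoord, mulVec_transpose, vecMul_vecMul, mul_nonsing_inv _ hA, vecMul_one]
  · rintro _ ⟨m, rfl⟩ _ ⟨k, rfl⟩
    refine ⟨m ⬝ᵥ k, ?_⟩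
    beta_reduce
    rw [dotProduct_mulVec, mulVec_transpose, vecMul_vecMul, nonsing_inv_mul _ hA, vecMul_one]
    simp [dotProduct]

theorem intLattice_eq_latticeOf_one (n : ℕ) : intLattice n = latticeOf 1 := by
  simp only [intLattice, latticeOf, one_mulVec]

theorem dualLattice_intLattice (n : ℕ) : dualLattice (intLattice n) = intLattice n := by
  rw [intLattice_eq_latticeOf_one, dualLattice_latticeOf (by simp), inv_one, transpose_one]

theorem abs_det_inv_transpose {m 𝕜 : Type*} [Fintype m] [DecidableEq m] [Field 𝕜]
    [LinearOrder 𝕜] [IsStrictOrderedRing 𝕜] (A : Matrix m m 𝕜) :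
    |A⁻¹ᵀ.det| = |A.det|⁻¹ := by
  rw [det_transpose, det_nonsing_inv, Ring.inverse_eq_inv', abs_inv]

end DualLattice

section Duality

variable {n : ℕ} {K : Set (Fin n → ℝ)}

theorem half_le_dotProduct_of_nonSeparable {Λ : Set (Fin n → ℝ)} (hsymm : K = -K)
    (h : NonSeparable Λ K) {v : Fin n → ℝ} (hv : v ∈ dualLattice Λ) (hv0 : v ≠ 0) :
    ∃ y ∈ K, 2⁻¹ ≤ y ⬝ᵥ v := by
  obtain ⟨x, hx, y, hy, hxy⟩ := h v hv0 2⁻¹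
  obtain ⟨j, hj⟩ := hv x hx
  rw [dotProduct_add, hj, dotProduct_comm] at hxy
  rcases le_or_gt j 0 with hj0 | hj0
  · have : (j : ℝ) ≤ 0 := mod_cast hj0
    exact ⟨y, hy, by linarith⟩
  · have : (1 : ℝ) ≤ j := mod_cast hj0
    refine ⟨-y, by rwa [hsymm, Set.neg_mem_neg], ?_⟩
    rw [neg_dotProduct]
    linarith

theorem exists_abs_sub_dotProduct_le {Λ : AddSubgroup (Fin n → ℝ)}
    (hspan : Submodule.span ℝ K = ⊤)
    (h : ∀ v ∈ dualLattice (Λ : Set (Fin n → ℝ)), v ≠ 0 → ∃ y ∈ K, 2⁻¹ ≤ y ⬝ᵥ v)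
    {u : Fin n → ℝ} (hu : u ≠ 0) (c : ℝ) :
    ∃ x ∈ Λ, ∃ y ∈ K, |c - u ⬝ᵥ x| ≤ |u ⬝ᵥ y| := by
  rcases (Λ.map (dotProductBilin ℝ ℝ u).toAddMonoidHom).dense_or_cyclic with hdense | ⟨a, hcyclic⟩
  · obtain ⟨y, hy, hne⟩ := exists_dotProduct_ne_zero_of_span_eq_top hspan hu
    obtain ⟨_, ⟨x, hx, rfl⟩, hdist⟩ := hdense.exists_dist_lt c (abs_pos.2 hne)
    exact ⟨x, hx, y, hy, hdist.le⟩
  have hmultiple : ∀ x ∈ Λ, ∃ j : ℤ, u ⬝ᵥ x = j * a := fun x hx => by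
    have : u ⬝ᵥ x ∈ AddSubgroup.closure {a} := hcyclic ▸ AddSubgroup.mem_map_of_mem _ hx
    obtain ⟨j, hj⟩ := AddSubgroup.mem_closure_singleton.1 this
    exact ⟨j, by rw [← hj, zsmul_eq_mul]⟩
  rcases eq_or_ne a 0 with rfl | ha
  · -- `u` annihilates `Λ`, so every multiple of `u` lies in the dual lattice.
    have hb : 2 * |c| + 1 ≠ 0 := by positivity
    obtain ⟨y, hy, hle⟩ := exists_half_abs_le_abs_dotProduct h hu hb fun x hx => by
      obtain ⟨j, hj⟩ := hmultiple x hx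
      exact ⟨0, by simp [hj]⟩
    rw [abs_of_nonneg (by positivity)] at hle
    refine ⟨0, Λ.zero_mem, y, hy, ?_⟩
    rw [dotProduct_zero, sub_zero]
    linarith
  · obtain ⟨y, hy, hle⟩ := exists_half_abs_le_abs_dotProduct h hu ha fun x hx => by
      obtain ⟨j, hj⟩ := hmultiple x hx
      exact ⟨j, by rw [smul_dotProduct, hj, smul_eq_mul, mul_comm, mul_inv_cancel_right₀ ha]⟩
    have hround : round (c / a) • a ∈ Λ.map (dotProductBilin ℝ ℝ u).toAddMonoidHom :=
      hcyclic ▸ AddSubgroup.mem_closure_singleton.2 ⟨_, rfl⟩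
    obtain ⟨x, hx, hxa : u ⬝ᵥ x = _⟩ := hround
    refine ⟨x, hx, y, hy, le_trans ?_ hle⟩
    rw [hxa, zsmul_eq_mul]
    exact abs_sub_round_div_mul_le ha c

theorem nonSeparable_iff_forall_mem_dualLattice (Λ : AddSubgroup (Fin n → ℝ))
    (hconn : IsPreconnected K) (hsymm : K = -K) (hspan : Submodule.span ℝ K = ⊤) :
    NonSeparable (Λ : Set (Fin n → ℝ)) K ↔
      ∀ v ∈ dualLattice (Λ : Set (Fin n → ℝ)), v ≠ 0 → ∃ y ∈ K, 2⁻¹ ≤ y ⬝ᵥ v := by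
  refine ⟨fun h v => half_le_dotProduct_of_nonSeparable hsymm h, fun h u hu c => ?_⟩
  obtain ⟨x, hx, y, hy, hle⟩ := exists_abs_sub_dotProduct_le hspan h hu c
  obtain ⟨z, hz, hzc⟩ := exists_dotProduct_eq_of_abs_le hconn hsymm hy hle
  exact ⟨x, hx, z, hz, by rw [dotProduct_add, hzc, add_sub_cancel]⟩

theorem nonSeparable_iff_admissible_dualLattice (Λ : AddSubgroup (Fin n → ℝ)) (hK : IsCompact K)
    (hconn : IsPreconnected K) (hsymm : K = -K) (hspan : Submodule.span ℝ K = ⊤) :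
    NonSeparable (Λ : Set (Fin n → ℝ)) K ↔
      Admissible (dualLattice (Λ : Set (Fin n → ℝ))) ((2⁻¹ : ℝ) • polarBody K) := by
  rw [nonSeparable_iff_forall_mem_dualLattice Λ hconn hsymm hspan,
    admissible_smul_polarBody_iff hK (by norm_num) (zero_mem_dualLattice _)]

theorem nonSeparable_latticeOf_iff (hK : IsCompact K) (hconn : IsPreconnected K)
    (hsymm : K = -K) (hspan : Submodule.span ℝ K = ⊤) {A : Matrix (Fin n) (Fin n) ℝ}
    (hA : A.det ≠ 0) :
    NonSeparable (latticeOf A) K ↔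
      Admissible (latticeOf A⁻¹ᵀ) ((2⁻¹ : ℝ) • polarBody K) := by
  rw [← dualLattice_latticeOf hA.isUnit, ← coe_latticeSubgroup,
    nonSeparable_iff_admissible_dualLattice _ hK hconn hsymm hspan]

theorem critDet_half_polarBody (hK : IsCompact K) (hconn : IsPreconnected K)
    (hsymm : K = -K) (hspan : Submodule.span ℝ K = ⊤) :
    critDet ((2⁻¹ : ℝ) • polarBody K) = (starCritDet K)⁻¹ := by
  have hdet : ∀ A : Matrix (Fin n) (Fin n) ℝ, A.det ≠ 0 → A⁻¹ᵀ.det ≠ 0 := fun A hA => by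
    rw [← abs_pos, abs_det_inv_transpose]
    exact inv_pos.2 (abs_pos.2 hA)
  rw [critDet, starCritDet, ← sInf_inv_eq_inv_sSup_of_pos]
  · congr 1
    ext d
    constructor
    · rintro ⟨B, hB, hadm, rfl⟩
      refine ⟨B⁻¹ᵀ, hdet B hB, ?_, (abs_det_inv_transpose B).symm⟩
      rwa [nonSeparable_latticeOf_iff hK hconn hsymm hspan (hdet B hB), ← transpose_nonsing_inv,
        transpose_transpose, nonsing_inv_nonsing_inv _ hB.isUnit]
    · rintro ⟨A, hA, hns, hd⟩
      refine ⟨A⁻¹ᵀ, hdet A hA, (nonSeparable_latticeOf_iff hK hconn hsymm hspan hA).1 hns, ?_⟩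
      rw [abs_det_inv_transpose, ← hd, inv_inv]
  · rintro _ ⟨A, hA, -, rfl⟩
    exact abs_pos.2 hA

end Duality

theorem int_starCritical_iff_critical_half_polar_general {n : ℕ} (K : Set (Fin n → ℝ))
    (hKc : IsCompact K) (hKconn : IsPreconnected K) (hKspan : Submodule.span ℝ K = ⊤)
    (hsymm : K = -K) :
    (NonSeparable (intLattice n) K ∧ (1 : ℝ) = starCritDet K) ↔
      (Admissible (intLattice n) ((2⁻¹ : ℝ) • polarBody K) ∧
        (1 : ℝ) = critDet ((2⁻¹ : ℝ) • polarBody K)) := by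
  have hint : NonSeparable (intLattice n) K ↔
      Admissible (intLattice n) ((2⁻¹ : ℝ) • polarBody K) := by
    have := nonSeparable_iff_admissible_dualLattice (latticeSubgroup 1) hKc hKconn hsymm hKspan
    rwa [coe_latticeSubgroup, ← intLattice_eq_latticeOf_one, dualLattice_intLattice] at this
  rw [hint, critDet_half_polarBody hKc hKconn hsymm hKspan, eq_comm (b := starCritDet K),
    eq_comm (b := (starCritDet K)⁻¹), inv_eq_one]

/-- For a centrally symmetric convex body `K ⊆ ℝⁿ` (noting `d(ℤⁿ) = 1`):
`ℤⁿ` is *critical for `K` iff `ℤⁿ` is critical for `(1/2)K°`. -/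
theorem int_starCritical_iff_critical_half_polar {n : ℕ} (K : Set (Fin n → ℝ))
    (hKc : IsCompact K) (hKconv : Convex ℝ K) (hKint : (interior K).Nonempty)
    (hsymm : K = -K) :
    (NonSeparable (intLattice n) K ∧ (1 : ℝ) = starCritDet K) ↔
      (Admissible (intLattice n) ((2⁻¹ : ℝ) • polarBody K) ∧
        (1 : ℝ) = critDet ((2⁻¹ : ℝ) • polarBody K)) :=
  int_starCritical_iff_critical_half_polar_general K hKc hKconv.isPreconnected
    (Submodule.eq_top_of_nonempty_interior' _ (hKint.mono (interior_mono Submodule.subset_span)))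
    hsymm
end
end
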